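/- A contract 𝒞 admits an agreement if and only if for every participant A ∈ 𝒜 there exists a set G ⊆ E such that ok(A,G) and G is contained in the set of all reachable events of 𝒞. -/

import Mathlib

/-- A contract: events `E`, participants `A`, ownership map `pi`, a saturated
fulfillment relation `ok`, a saturated enabling relation `en` (`⊢`) and a
saturated circular enabling relation `cen` (`⊩`). -/
structure Contract (E A : Type) [Fintype E] [Fintype A] where
  pi : E → A
  ok : A → Set E → Prop
  ok_sat : ∀ (a : A) (X Y : Set E), ok a X → X ⊆ Y → ok a Y
  en : Set E → E → Prop
  en_sat : ∀ (X Y : Set E) (e : E), en X e → X ⊆ Y → en Y e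
  cen : Set E → E → Prop
  cen_sat : ∀ (X Y : Set E) (e : E), cen X e → X ⊆ Y → cen Y e

variable {E A : Type} [Fintype E] [Fintype A]

/-- `C` is a configuration iff there is a sequence `e₀,…,eₙ` whose elements are
exactly those of `C`, where each `eᵢ` is either `⊢`-enabled by its predecessors
or `⊩`-enabled by `C` itself. -/
def IsConfig (𝒞 : Contract E A) (C : Set E) : Prop :=
  ∃ l : List E, (∀ e, e ∈ l ↔ e ∈ C) ∧
    ∀ i : Fin l.length, 𝒞.en {e | e ∈ l.take i.1} (l.get i) ∨ 𝒞.cen C (l.get i)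

/-- An event is reachable iff it belongs to some configuration. -/
def Reachable (𝒞 : Contract E A) (e : E) : Prop :=
  ∃ C, IsConfig 𝒞 C ∧ e ∈ C

/-- An agreement: a configuration in which every participant is satisfied. -/
def Agreement (𝒞 : Contract E A) (C : Set E) : Prop :=
  IsConfig 𝒞 C ∧ ∀ a : A, 𝒞.ok a C

/-!
Concatenating the sequences of two configurations gives a sequence for their union, because both
enabling relations are saturated. As `E` is finite, the set of all reachable events is therefore
itself a configuration, and it is the largest one; by saturation of `ok`, it is an agreement as
soon as every participant has a goal inside it.
-/

/-- The condition that a configuration `C` puts on an event `e` of its sequence whose predecessors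
form the set `X`: either `X ⊢ e` or `C ⊩ e`. -/
def Justified (𝒞 : Contract E A) (X C : Set E) (e : E) : Prop :=
  𝒞.en X e ∨ 𝒞.cen C e

/-- A sequence each of whose events is justified by its predecessors or, circularly, by `C`.
The events of the sequence need not be those of `C`, so that `C` may be enlarged while the
sequence stays fixed. -/
def IsTrace (𝒞 : Contract E A) (C : Set E) (l : List E) : Prop :=
  ∀ i : Fin l.length, Justified 𝒞 {e | e ∈ l.take i} C (l.get i)

variable {𝒞 : Contract E A} {C D X Y : Set E} {e : E} {l m : List E} {S : Set (Set E)}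

theorem Justified.mono (h : Justified 𝒞 X C e) (hXY : X ⊆ Y) (hCD : C ⊆ D) :
    Justified 𝒞 Y D e :=
  h.imp (𝒞.en_sat X Y e · hXY) (𝒞.cen_sat C D e · hCD)

theorem IsTrace.mono (h : IsTrace 𝒞 C l) (hCD : C ⊆ D) : IsTrace 𝒞 D l :=
  fun i => (h i).mono subset_rfl hCD

theorem IsTrace.append (hl : IsTrace 𝒞 C l) (hm : IsTrace 𝒞 C m) : IsTrace 𝒞 C (l ++ m) := by
  rintro ⟨i, hi⟩
  simp only [List.get_eq_getElem, List.take_append, List.mem_append]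
  obtain hil | hli := lt_or_ge i l.length
  · rw [List.getElem_append_left hil]
    exact (hl ⟨i, hil⟩).mono (fun _ => Or.inl) subset_rfl
  · have him : i - l.length < m.length := by
      rw [List.length_append] at hi
      omega
    rw [List.getElem_append_right hli]
    exact (hm ⟨i - l.length, him⟩).mono (fun _ => Or.inr) subset_rfl

theorem isConfig_empty : IsConfig 𝒞 ∅ :=
  ⟨[], by simp, fun i => i.elim0⟩

theorem IsConfig.union (hC : IsConfig 𝒞 C) (hD : IsConfig 𝒞 D) : IsConfig 𝒞 (C ∪ D) := by
  obtain ⟨l, hlC, hl : IsTrace 𝒞 C l⟩ := hC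
  obtain ⟨m, hmD, hm : IsTrace 𝒞 D m⟩ := hD
  have hlm : IsTrace 𝒞 (C ∪ D) (l ++ m) :=
    (hl.mono Set.subset_union_left).append (hm.mono Set.subset_union_right)
  exact ⟨l ++ m, by simp [hlC, hmD], hlm⟩

theorem supClosed_setOf_isConfig : SupClosed {C | IsConfig 𝒞 C} :=
  fun _ hC _ hD => IsConfig.union hC hD

theorem isConfig_sUnion (hS : ∀ C ∈ S, IsConfig 𝒞 C) : IsConfig 𝒞 (⋃₀ S) :=
  supClosed_setOf_isConfig.sSup_mem S.toFinite isConfig_empty hS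

theorem isConfig_setOf_reachable : IsConfig 𝒞 {e | Reachable 𝒞 e} :=
  isConfig_sUnion (S := {C | IsConfig 𝒞 C}) fun _ hC => hC

theorem IsConfig.subset_setOf_reachable (hC : IsConfig 𝒞 C) : C ⊆ {e | Reachable 𝒞 e} :=
  fun _ he => ⟨C, hC, he⟩

/-- A contract admits an agreement iff every participant has a goal `G`
contained in the set of all reachable events. -/
theorem agreement_iff_reachable_goals (𝒞 : Contract E A) :
    (∃ C, Agreement 𝒞 C) ↔
      ∀ a : A, ∃ G : Set E, 𝒞.ok a G ∧ G ⊆ {e | Reachable 𝒞 e} := by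
  constructor
  · rintro ⟨C, hC, hok⟩ a
    exact ⟨C, hok a, hC.subset_setOf_reachable⟩
  · intro goals
    refine ⟨{e | Reachable 𝒞 e}, isConfig_setOf_reachable, fun a => ?_⟩
    obtain ⟨G, hG, hGreach⟩ := goals a
    exact 𝒞.ok_sat a G _ hG hGreach
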